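/- arXiv:math/0303135 — 3 statements merged into one kernel-verified Lean document; each statement's English description precedes it below -/
import Mathlib

section
/- Let E be a real inner product space and f : E → ℝ a function that is differentiable everywhere and whose gradient map ∇f : E → E is differentiable everywhere; denote by H(x) = D(∇f)(x) the Hessian of f at x, and assume it is positive definite at every point, i.e. ⟨H(x)v, v⟩ > 0 for all x ∈ E and all v ≠ 0. Let Γ be an integral curve of ∇f/‖∇f‖² defined on an interval. Then λ ↦ ‖∇f(Γ(λ))‖ is strictly increasing along Γ; equivalently, for any constant c ∈ ℝ the quantity R(Γ(λ)) := c − ‖∇f(Γ(λ))‖² is strictly decreasing along Γ: for λ₁ < λ₂ in the interval, ‖∇f(Γ(λ₁))‖ < ‖∇f(Γ(λ₂))‖. -/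
/-!
Along an integral curve `Γ` the velocity is a positive multiple of `∇f`, so by the chain rule
`‖∇f(Γ)‖²` has derivative `2 ⟪H ∇f, ∇f⟫ / ‖∇f‖²`, which is positive because the Hessian is positive
definite and `∇f ≠ 0` on the curve. The mean value theorem on `[l₁, l₂]`, in the form
`strictMonoOn_of_deriv_pos`, then gives strict monotonicity of the square, hence of the norm.
-/

open scoped RealInnerProductSpace

/-- If the Hessian `H = D(∇f)` is positive definite everywhere, then `‖∇f‖` is
strictly increasing along any integral curve of `∇f/‖∇f‖²`; equivalently, for any
constant `c`, the quantity `R = c − ‖∇f‖²` is strictly decreasing along the curve. -/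
theorem norm_grad_strictMono_along_integral_curve
    {E : Type*} [NormedAddCommGroup E] [InnerProductSpace ℝ E]
    (f : E → ℝ) (gradf : E → E) (H : E → E →L[ℝ] E)
    (hdiff : ∀ x, DifferentiableAt ℝ f x)
    (hgrad : ∀ x v, ⟪gradf x, v⟫ = fderiv ℝ f x v)
    (hHess : ∀ x, HasFDerivAt gradf (H x) x)
    (hpos : ∀ x : E, ∀ v : E, v ≠ 0 → 0 < ⟪H x v, v⟫)
    (s : Set ℝ) (hs : s.OrdConnected)
    (Γ : ℝ → E)
    (hΓne : ∀ l ∈ s, gradf (Γ l) ≠ 0)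
    (hΓ : ∀ l ∈ s, HasDerivAt Γ ((‖gradf (Γ l)‖ ^ 2)⁻¹ • gradf (Γ l)) l) :
    ∀ l₁ ∈ s, ∀ l₂ ∈ s, l₁ < l₂ → ‖gradf (Γ l₁)‖ < ‖gradf (Γ l₂)‖ := by
  intro l₁ h₁ l₂ h₂ hlt
  have hsub : Set.Icc l₁ l₂ ⊆ s := hs.out h₁ h₂
  -- Chain rule and the integral curve equation: `(‖∇f‖²)' = 2 ⟪∇f, H (∇f)⟫ / ‖∇f‖²` along `Γ`.
  have hderiv : ∀ l ∈ s, HasDerivAt (fun t => ‖gradf (Γ t)‖ ^ 2)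
      (2 * ⟪gradf (Γ l), H (Γ l) ((‖gradf (Γ l)‖ ^ 2)⁻¹ • gradf (Γ l))⟫) l :=
    fun l hl => ((hHess (Γ l)).comp_hasDerivAt l (hΓ l hl)).norm_sq
  have hmono : StrictMonoOn (fun t => ‖gradf (Γ t)‖ ^ 2) (Set.Icc l₁ l₂) := by
    refine strictMonoOn_of_deriv_pos (convex_Icc l₁ l₂)
      (fun l hl => (hderiv l (hsub hl)).continuousAt.continuousWithinAt) fun l hl => ?_
    have hl' : l ∈ s := hsub (interior_subset hl)
    have hne := hΓne l hl'
    rw [(hderiv l hl').deriv, map_smul, real_inner_smul_right, real_inner_comm]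
    have hH := hpos (Γ l) _ hne
    have hn := norm_pos_iff.mpr hne
    positivity
  exact lt_of_pow_lt_pow_left₀ 2 (norm_nonneg _)
    (hmono (Set.left_mem_Icc.mpr hlt.le) (Set.right_mem_Icc.mpr hlt.le) hlt)
end

section
/- Let E be a real inner product space, f : E → ℝ differentiable everywhere, and Γ : [a, b] → E an integral curve of ∇f/‖∇f‖². Suppose η > 0 is a real number with ‖∇f(Γ(τ))‖ ≥ η for every τ ∈ [a, b]. Then ‖Γ(b) − Γ(a)‖ ≤ (b − a)/η, and consequently f(Γ(b)) − f(Γ(a)) = b − a ≥ η·‖Γ(b) − Γ(a)‖. -/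
/-!
Along an integral curve of `∇f/‖∇f‖²` the velocity has norm `1/‖∇f‖ ≤ 1/η`, so the mean value
inequality bounds the displacement by `(b - a)/η`. By the chain rule `f ∘ Γ` has derivative
`⟪∇f, ∇f/‖∇f‖²⟫ = 1`, so `f (Γ τ) - τ` has zero derivative and is constant on `[a, b]`.
-/

open scoped RealInnerProductSpace

/-- If `Γ : [a,b] → E` is an integral curve of `∇f/‖∇f‖²` and `‖∇f(Γ(τ))‖ ≥ η > 0`
on `[a,b]`, then `‖Γ(b) − Γ(a)‖ ≤ (b − a)/η`, and consequently
`f(Γ(b)) − f(Γ(a)) = b − a ≥ η·‖Γ(b) − Γ(a)‖`. -/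
theorem integral_curve_length_estimate
    {E : Type*} [NormedAddCommGroup E] [InnerProductSpace ℝ E]
    (f : E → ℝ) (gradf : E → E)
    (hdiff : ∀ x, DifferentiableAt ℝ f x)
    (hgrad : ∀ x v, ⟪gradf x, v⟫ = fderiv ℝ f x v)
    (a b : ℝ) (hab : a ≤ b) (Γ : ℝ → E)
    (hΓne : ∀ τ ∈ Set.Icc a b, gradf (Γ τ) ≠ 0)
    (hΓ : ∀ τ ∈ Set.Icc a b,
      HasDerivAt Γ ((‖gradf (Γ τ)‖ ^ 2)⁻¹ • gradf (Γ τ)) τ)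
    (η : ℝ) (hη : 0 < η)
    (hlow : ∀ τ ∈ Set.Icc a b, η ≤ ‖gradf (Γ τ)‖) :
    ‖Γ b - Γ a‖ ≤ (b - a) / η ∧
    f (Γ b) - f (Γ a) = b - a ∧
    b - a ≥ η * ‖Γ b - Γ a‖ := by
  have hlen : ‖Γ b - Γ a‖ ≤ (b - a) / η := by
    have hbound : ‖Γ b - Γ a‖ ≤ η⁻¹ * (b - a) := by
      refine norm_image_sub_le_of_norm_deriv_le_segment'
        (fun τ hτ => (hΓ τ hτ).hasDerivWithinAt) (fun τ hτ => ?_) b ⟨hab, le_rfl⟩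
      have hτ' := Set.Ico_subset_Icc_self hτ
      have hpos : 0 < ‖gradf (Γ τ)‖ := norm_pos_iff.2 (hΓne τ hτ')
      have hspeed : ‖(‖gradf (Γ τ)‖ ^ 2)⁻¹ • gradf (Γ τ)‖ = ‖gradf (Γ τ)‖⁻¹ := by
        rw [norm_smul, norm_inv, norm_pow, norm_norm]
        field_simp
      rw [hspeed]
      exact inv_anti₀ hη (hlow τ hτ')
    rwa [div_eq_inv_mul]
  have hval : f (Γ b) - f (Γ a) = b - a := by
    have hderiv : ∀ τ ∈ Set.Icc a b, HasDerivAt (fun t => f (Γ t) - t) 0 τ := by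
      intro τ hτ
      have hpos : 0 < ‖gradf (Γ τ)‖ := norm_pos_iff.2 (hΓne τ hτ)
      have hone : fderiv ℝ f (Γ τ) ((‖gradf (Γ τ)‖ ^ 2)⁻¹ • gradf (Γ τ)) = 1 := by
        rw [← hgrad, real_inner_smul_right, real_inner_self_eq_norm_sq]
        exact inv_mul_cancel₀ (pow_ne_zero 2 hpos.ne')
      have hcomp := (hdiff (Γ τ)).hasFDerivAt.comp_hasDerivAt τ (hΓ τ hτ)
      rw [hone] at hcomp
      simpa using! hcomp.sub (hasDerivAt_id τ)
    have hconst := constant_of_has_deriv_right_zero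
      (fun τ hτ => (hderiv τ hτ).continuousAt.continuousWithinAt)
      (fun τ hτ => (hderiv τ (Set.Ico_subset_Icc_self hτ)).hasDerivWithinAt) b ⟨hab, le_rfl⟩
    linarith
  refine ⟨hlen, hval, ?_⟩
  rw [le_div_iff₀ hη] at hlen
  linarith
end

section
/- Let E be a real inner product space and f : E → ℝ a differentiable function with ‖∇f(x)‖ ≤ 1 for every x ∈ E. Let O ∈ E with f(O) = 0, and let Γ : [0, ∞) → E be an integral curve of ∇f/‖∇f‖² with f(Γ(0)) = 0. Assume that the function λ ↦ ‖∇f(Γ(λ))‖ is nondecreasing and that ζ := sup_{λ ≥ 0} ‖∇f(Γ(λ))‖ is positive. Then for every ε ∈ (0, ζ) there exists Λ ≥ 0 such that for all λ ≥ Λ one has (ζ − ε)·‖Γ(λ) − O‖ ≤ f(Γ(λ)) ≤ ‖Γ(λ) − O‖ (and f(Γ(λ)) = λ). -/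
open scoped RealInnerProductSpace

/-!
Along `Γ` the chain rule gives `(f ∘ Γ)' = ⟪∇f, ∇f⟫ / ‖∇f‖² = 1`, so `f (Γ l) = l`. The upper bound
says that `f` is 1-Lipschitz, which is the mean value inequality. For the lower bound, the speed of
`Γ` is `1 / ‖∇f‖`; past some `l₀` it is at most `1 / c` with `c := ζ - ε / 2`, so
`‖Γ l - O‖ ≤ ‖Γ l₀ - O‖ + (l - l₀) / c`. Since `ζ - ε < c`, the product of the right-hand side with
`ζ - ε` is at most `l` once `l` is large.
-/

/-- Flat model of Lemma 3.2: if `‖∇f‖ ≤ 1` everywhere, `f(O) = 0`,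
`Γ : [0,∞) → E` is an integral curve of `∇f/‖∇f‖²` with `f(Γ(0)) = 0`,
`λ ↦ ‖∇f(Γ(λ))‖` is nondecreasing with positive supremum `ζ`, then for every
`ε ∈ (0, ζ)` there is `Λ ≥ 0` such that
`(ζ − ε)·‖Γ(λ) − O‖ ≤ f(Γ(λ)) ≤ ‖Γ(λ) − O‖` and `f(Γ(λ)) = λ` for all `λ ≥ Λ`. -/
theorem potential_growth_estimate
    {E : Type*} [NormedAddCommGroup E] [InnerProductSpace ℝ E]
    (f : E → ℝ) (gradf : E → E)
    (hdiff : ∀ x, DifferentiableAt ℝ f x)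
    (hgrad : ∀ x v, ⟪gradf x, v⟫ = fderiv ℝ f x v)
    (hbound : ∀ x, ‖gradf x‖ ≤ 1)
    (O : E) (hO : f O = 0)
    (Γ : ℝ → E) (hΓ0 : f (Γ 0) = 0)
    (hΓne : ∀ l : ℝ, 0 ≤ l → gradf (Γ l) ≠ 0)
    (hΓ : ∀ l : ℝ, 0 ≤ l →
      HasDerivAt Γ ((‖gradf (Γ l)‖ ^ 2)⁻¹ • gradf (Γ l)) l)
    (hmono : ∀ l₁ l₂ : ℝ, 0 ≤ l₁ → l₁ ≤ l₂ → ‖gradf (Γ l₁)‖ ≤ ‖gradf (Γ l₂)‖)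
    (ζ : ℝ) (hζ : IsLUB {r : ℝ | ∃ l : ℝ, 0 ≤ l ∧ r = ‖gradf (Γ l)‖} ζ)
    (hζpos : 0 < ζ) :
    ∀ ε : ℝ, 0 < ε → ε < ζ → ∃ Λ : ℝ, 0 ≤ Λ ∧ ∀ l : ℝ, Λ ≤ l →
      (ζ - ε) * ‖Γ l - O‖ ≤ f (Γ l) ∧ f (Γ l) ≤ ‖Γ l - O‖ ∧ f (Γ l) = l := by
  have hval : ∀ l : ℝ, 0 ≤ l → f (Γ l) = l := by
    intro l hl
    have hd : ∀ x ∈ Set.Icc (0 : ℝ) l,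
        HasDerivWithinAt (fun t => f (Γ t) - t) 0 (Set.Icc 0 l) x := by
      intro x hx
      have h := ((hdiff (Γ x)).hasFDerivAt.comp_hasDerivAt x (hΓ x hx.1)).sub (hasDerivAt_id x)
      have hne : ‖gradf (Γ x)‖ ^ 2 ≠ 0 := pow_ne_zero 2 (norm_ne_zero_iff.2 (hΓne x hx.1))
      rw [← hgrad, real_inner_smul_right, real_inner_self_eq_norm_sq, inv_mul_cancel₀ hne,
        sub_self] at h
      exact h.hasDerivWithinAt
    have h := norm_image_sub_le_of_norm_deriv_le_segment' (C := 0) hd (by simp) l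
      (Set.right_mem_Icc.2 hl)
    rw [zero_mul, norm_le_zero_iff] at h
    linarith
  have hlip : ∀ x, f x ≤ ‖x - O‖ := by
    intro x
    have hb : ∀ y ∈ (Set.univ : Set E), ‖fderiv ℝ f y‖ ≤ 1 := by
      intro y _
      refine ContinuousLinearMap.opNorm_le_bound _ zero_le_one fun v => ?_
      rw [← hgrad]
      exact (norm_inner_le_norm _ _).trans
        (mul_le_mul_of_nonneg_right (hbound y) (norm_nonneg v))
    have h := convex_univ.norm_image_sub_le_of_norm_fderiv_le (𝕜 := ℝ)
      (fun y _ => hdiff y) hb (Set.mem_univ O) (Set.mem_univ x)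
    rw [hO, sub_zero, one_mul] at h
    exact (le_abs_self _).trans h
  intro ε hε hεζ
  set c := ζ - ε / 2 with hc
  have hc0 : 0 < c := by linarith
  obtain ⟨_, ⟨l₀, hl₀, rfl⟩, hcl, -⟩ := hζ.exists_between (show c < ζ by linarith)
  have htravel : ∀ l, l₀ ≤ l → ‖Γ l - Γ l₀‖ ≤ c⁻¹ * (l - l₀) := by
    intro l hl
    refine norm_image_sub_le_of_norm_deriv_le_segment'
      (fun x hx => (hΓ x (hl₀.trans hx.1)).hasDerivWithinAt) (fun x hx => ?_) l
      (Set.right_mem_Icc.2 hl)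
    have hcx : c ≤ ‖gradf (Γ x)‖ := hcl.le.trans (hmono l₀ x hl₀ hx.1)
    have hpos : 0 < ‖gradf (Γ x)‖ := hc0.trans_le hcx
    have hspeed : ‖(‖gradf (Γ x)‖ ^ 2)⁻¹ • gradf (Γ x)‖ = ‖gradf (Γ x)‖⁻¹ := by
      rw [norm_smul, norm_inv, norm_pow, norm_norm]
      field_simp
    rw [hspeed]
    exact inv_anti₀ hc0 hcx
  -- The second entry solves `(ζ - ε) * (‖Γ l₀ - O‖ + l / c) = l` for `l`, as `c - (ζ - ε) = ε / 2`.
  refine ⟨max l₀ ((ζ - ε) * ‖Γ l₀ - O‖ * c / (ε / 2)), hl₀.trans (le_max_left _ _),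
    fun l hl => ?_⟩
  have h1 : l₀ ≤ l := (le_max_left _ _).trans hl
  have h2 := (le_max_right _ _).trans hl
  rw [div_le_iff₀ (by positivity)] at h2
  refine ⟨?_, hlip _, hval l (hl₀.trans h1)⟩
  rw [hval l (hl₀.trans h1)]
  have htri : ‖Γ l - O‖ ≤ c⁻¹ * l + ‖Γ l₀ - O‖ := by
    have h3 := norm_sub_le_norm_sub_add_norm_sub (Γ l) (Γ l₀) O
    have h4 := htravel l h1
    have h5 : 0 ≤ c⁻¹ * l₀ := by positivity
    linarith
  refine (mul_le_mul_of_nonneg_left htri (by linarith)).trans ?_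
  refine le_of_mul_le_mul_right ?_ hc0
  have h6 : (ζ - ε) * (c⁻¹ * l + ‖Γ l₀ - O‖) * c
      = (ζ - ε) * l + (ζ - ε) * ‖Γ l₀ - O‖ * c := by
    field_simp
  have h7 : l * c = (ζ - ε) * l + l * (ε / 2) := by rw [hc]; ring
  linarith
end
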